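/- arXiv:2601.07428 — 2 statements merged into one kernel-verified Lean document; each statement's English description precedes it below -/
import Mathlib

section
/- non*_ω(nwd) = non(ℳ), where nwd is the nowhere dense ideal on 2^{<ω} and non(ℳ) is the uniformity of the meager ideal. -/
open Cardinal Filter Set
open scoped ENNReal

noncomputable section

/-- An ideal on a (countable) set `X`, in the sense of the paper: a proper family of
subsets of `X` closed under taking subsets and finite unions and containing all
finite subsets of `X`. -/
structure IsIdealOn {X : Type} (I : Set (Set X)) : Prop where
  subset_mem : ∀ ⦃A B : Set X⦄, A ⊆ B → B ∈ I → A ∈ I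
  union_mem : ∀ ⦃A B : Set X⦄, A ∈ I → B ∈ I → A ∪ B ∈ I
  finite_mem : ∀ ⦃A : Set X⦄, A.Finite → A ∈ I
  proper : (univ : Set X) ∉ I

/-- The finite initial segment `x ↾ n` of `x : X^ω`, as a list (an element of `X^{<ω}`). -/
def seg {X : Type} (x : ℕ → X) (n : ℕ) : List X := (List.range n).map x

/-- The `I`-Miller null ideal `M_I`: the σ-ideal on `X^ω` generated by the sets
`M_φ = {x | ∀^∞ n, x n ∈ φ (x ↾ n)}`, where `φ : X^{<ω} → I`.  (A set is in the
generated σ-ideal iff it is covered by countably many generators.) -/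
def MIdeal {X : Type} (I : Set (Set X)) : Set (Set (ℕ → X)) :=
  {A | ∃ φ : ℕ → List X → Set X, (∀ n s, φ n s ∈ I) ∧
    A ⊆ ⋃ n, {x : ℕ → X | ∀ᶠ m in atTop, x m ∈ φ n (seg x m)}}

/-- The σ-ideal `K_I` on `X^ω` generated by the sets
`K_φ = {x | ∀^∞ n, x n ∈ φ n}`, where `φ : ω → I`. -/
def KIdeal {X : Type} (I : Set (Set X)) : Set (Set (ℕ → X)) :=
  {A | ∃ φ : ℕ → ℕ → Set X, (∀ n m, φ n m ∈ I) ∧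
    A ⊆ ⋃ n, {x : ℕ → X | ∀ᶠ m in atTop, x m ∈ φ n m}}

/-- Additivity `add(J)` of a (σ-)ideal `J`: the least cardinality of a subfamily of `J`
whose union is not in `J`. -/
def addIdeal {Y : Type} (J : Set (Set Y)) : Cardinal :=
  sInf {c | ∃ 𝒜 : Set (Set Y), 𝒜 ⊆ J ∧ ⋃₀ 𝒜 ∉ J ∧ Cardinal.mk 𝒜 = c}

/-- Covering number `cov(J)`: the least cardinality of a subfamily of `J` covering `Y`. -/
def covIdeal {Y : Type} (J : Set (Set Y)) : Cardinal :=
  sInf {c | ∃ 𝒜 : Set (Set Y), 𝒜 ⊆ J ∧ ⋃₀ 𝒜 = Set.univ ∧ Cardinal.mk 𝒜 = c}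

/-- Uniformity `non(J)`: the least cardinality of a subset of `Y` not in `J`. -/
def nonIdeal {Y : Type} (J : Set (Set Y)) : Cardinal :=
  sInf {c | ∃ S : Set Y, S ∉ J ∧ Cardinal.mk S = c}

/-- Cofinality `cof(J)`: the least cardinality of a cofinal (w.r.t. `⊆`) subfamily of `J`. -/
def cofIdeal {Y : Type} (J : Set (Set Y)) : Cardinal :=
  sInf {c | ∃ 𝒜 : Set (Set Y), 𝒜 ⊆ J ∧ (∀ B ∈ J, ∃ A ∈ 𝒜, B ⊆ A) ∧ Cardinal.mk 𝒜 = c}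

/-- `f ≤* g`: eventual domination on `ω^ω`. -/
def LeStar (f g : ℕ → ℕ) : Prop := ∀ᶠ n in atTop, f n ≤ g n

/-- The bounding number `𝔟`. -/
def bNum : Cardinal :=
  sInf {c | ∃ F : Set (ℕ → ℕ), (∀ g : ℕ → ℕ, ∃ f ∈ F, ¬ LeStar f g) ∧ Cardinal.mk F = c}

/-- The dominating number `𝔡`. -/
def dNum : Cardinal :=
  sInf {c | ∃ F : Set (ℕ → ℕ), (∀ f : ℕ → ℕ, ∃ g ∈ F, LeStar f g) ∧ Cardinal.mk F = c}

/-- `A ⊆* B`: almost inclusion (`A \ B` finite). -/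
def AlSub {X : Type} (A B : Set X) : Prop := (A \ B).Finite

/-- The set of cardinalities of witnessing families for `add*_ω(I)`: families `𝒜 ⊆ I`
such that for every countable `B̄ ⊆ I` some `A ∈ 𝒜` satisfies `A ⊄* B` for all `B ∈ B̄`.
`add*_ω(I)` is the minimum of this set (`∞` if it is empty). -/
def addStarOmegaFam {X : Type} (I : Set (Set X)) : Set Cardinal :=
  {c | ∃ 𝒜 : Set (Set X), 𝒜 ⊆ I ∧
    (∀ B : ℕ → Set X, (∀ n, B n ∈ I) → ∃ A ∈ 𝒜, ∀ n, ¬ AlSub A (B n)) ∧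
    Cardinal.mk 𝒜 = c}

/-- The set of cardinalities of witnessing families for `cof*_ω(I)`: families `𝒜` of
countable subsets of `I` such that for every countable `B̄ ⊆ I` there is `Ā ∈ 𝒜` with:
every `B ∈ B̄` satisfies `B ⊆* A` for some `A ∈ Ā`.  `cof*_ω(I)` is the minimum. -/
def cofStarOmegaFam {X : Type} (I : Set (Set X)) : Set Cardinal :=
  {c | ∃ 𝒜 : Set (Set (Set X)), (∀ As ∈ 𝒜, As.Countable ∧ As ⊆ I) ∧
    (∀ B : ℕ → Set X, (∀ n, B n ∈ I) → ∃ As ∈ 𝒜, ∀ n, ∃ A ∈ As, AlSub (B n) A) ∧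
    Cardinal.mk 𝒜 = c}

/-- The set of cardinalities of witnessing families for `non*_ω(I)`: families `𝒜` of
infinite subsets of `X` such that for every countable `B̄ ⊆ I` there is `A ∈ 𝒜` with
`A ∩ B` finite for all `B ∈ B̄`.  `non*_ω(I)` is the minimum of this set. -/
def nonStarOmegaFam {X : Type} (I : Set (Set X)) : Set Cardinal :=
  {c | ∃ 𝒜 : Set (Set X), (∀ A ∈ 𝒜, A.Infinite) ∧
    (∀ B : ℕ → Set X, (∀ n, B n ∈ I) → ∃ A ∈ 𝒜, ∀ n, (A ∩ B n).Finite) ∧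
    Cardinal.mk 𝒜 = c}

/-- The set of cardinalities of witnessing families for `cov*(I)`: families `𝒜 ⊆ I` such
that every infinite `B ⊆ X` has infinite intersection with some member of `𝒜`.
`cov*(I)` is the minimum of this set (`∞` if it is empty, i.e. if `I` is not tall). -/
def covStarFam {X : Type} (I : Set (Set X)) : Set Cardinal :=
  {c | ∃ 𝒜 : Set (Set X), 𝒜 ⊆ I ∧
    (∀ B : Set X, B.Infinite → ∃ A ∈ 𝒜, (A ∩ B).Infinite) ∧ Cardinal.mk 𝒜 = c}

/-- The set of cardinalities of witnessing families for `non*(I)`: families `𝒜` of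
infinite subsets of `X` such that every `B ∈ I` has finite intersection with some
member of `𝒜`.  `non*(I)` is the minimum of this set. -/
def nonStarFam {X : Type} (I : Set (Set X)) : Set Cardinal :=
  {c | ∃ 𝒜 : Set (Set X), (∀ A ∈ 𝒜, A.Infinite) ∧
    (∀ B ∈ I, ∃ A ∈ 𝒜, (A ∩ B).Finite) ∧ Cardinal.mk 𝒜 = c}

/-- The meager ideal of the product space `X^ω`, where `X` carries the discrete
topology (for countable `X` this is a Polish space). -/
def meagerIdeal (X : Type) : Set (Set (ℕ → X)) :=
  letI : TopologicalSpace X := ⊥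
  {A : Set (ℕ → X) | IsMeagre A}

/-- The Fubini product `I ⊗ J` of two ideals. -/
def Fubini {X Y : Type} (I : Set (Set X)) (J : Set (Set Y)) : Set (Set (X × Y)) :=
  {A | {x : X | {y : Y | (x, y) ∈ A} ∉ J} ∈ I}

/-- The ideal `Fin` of finite subsets of `X`. -/
def finIdeal (X : Type) : Set (Set X) := {A : Set X | A.Finite}

/-- The nowhere dense ideal on `2^{<ω}`: `A` belongs to it iff for every `s` there is an
extension `t ⊇ s` none of whose extensions belongs to `A`. -/
def nwdIdeal : Set (Set (List Bool)) :=
  {A | ∀ s : List Bool, ∃ t : List Bool, s <+: t ∧ ∀ u : List Bool, t <+: u → u ∉ A}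

/-- A submeasure: monotone, finitely subadditive, vanishing on `∅`. -/
def IsSubmeasure (φ : Set ℕ → ℝ≥0∞) : Prop :=
  φ ∅ = 0 ∧ (∀ A B : Set ℕ, A ⊆ B → φ A ≤ φ B) ∧ ∀ A B : Set ℕ, φ (A ∪ B) ≤ φ A + φ B

/-- `I` is gradually fragmented: there are a partition `⟨P n⟩` of `ω` into nonempty finite
sets and submeasures `φ n` with `A ∈ I ↔ sup_n φ n (A ∩ P n) < ∞`, together with
`f : ω → ω` such that for all `n, i`, for all but finitely many `j`: any family of at
most `i` subsets of `P j`, each of `φ j`-value `≤ n`, has union of `φ j`-value `≤ f n`. -/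
def GraduallyFragmented (I : Set (Set ℕ)) : Prop :=
  ∃ (P : ℕ → Set ℕ) (φ : ℕ → Set ℕ → ℝ≥0∞) (f : ℕ → ℕ),
    (∀ n, (P n).Finite) ∧ (∀ n, (P n).Nonempty) ∧
    (∀ n m, n ≠ m → Disjoint (P n) (P m)) ∧ (⋃ n, P n) = Set.univ ∧
    (∀ n, IsSubmeasure (φ n)) ∧
    (∀ A : Set ℕ, A ∈ I ↔ (⨆ n, φ n (A ∩ P n)) < ⊤) ∧
    (∀ n i : ℕ, ∀ᶠ j in atTop, ∀ ℬ : Finset (Set ℕ), ℬ.card ≤ i →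
      (∀ B ∈ ℬ, B ⊆ P j) → (∀ B ∈ ℬ, φ j B ≤ (n : ℝ≥0∞)) →
      φ j (⋃ B ∈ ℬ, B) ≤ ((f n : ℕ) : ℝ≥0∞))

/-- The basic clopen cylinder of `2^ω` determined by a finite binary string. -/
def cylSet (s : List Bool) : Set (ℕ → Bool) :=
  {x | ∀ i : Fin s.length, x i.val = s.get i}

/-- `A ⊆ 2^ω` is null for the uniform (coin-flipping) product measure: for every `ε > 0`
it is covered by countably many cylinders of total weight `≤ ε` (the cylinder of a
string `s` has weight `2^{-|s|}`). -/
def IsNullCantor (A : Set (ℕ → Bool)) : Prop :=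
  ∀ ε : ℝ≥0∞, 0 < ε → ∃ s : ℕ → List Bool,
    A ⊆ (⋃ n, cylSet (s n)) ∧ (∑' n : ℕ, (2⁻¹ : ℝ≥0∞) ^ (s n).length) ≤ ε

/-- Coordinatewise addition modulo 2 on `2^ω`. -/
def xorAdd (x y : ℕ → Bool) : ℕ → Bool := fun n => xor (x n) (y n)

/-- The transitive additivity `add_t(𝒩)` of the null ideal of `2^ω`:
`min {|A| : A ⊆ 2^ω ∧ ∃ X ∈ 𝒩, A + X ∉ 𝒩}`. -/
def addTNull : Cardinal :=
  sInf {c | ∃ A : Set (ℕ → Bool),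
    (∃ N : Set (ℕ → Bool), IsNullCantor N ∧ ¬ IsNullCantor (Set.image2 xorAdd A N)) ∧
    Cardinal.mk A = c}

/-- Kada's cardinal invariant `𝔩`: the least `κ` such that for every `g ∈ ω^ω` there is a
family `𝒮`, of size `κ`, of slaloms `S` with `S i ⊆ {0, …, g i}` and `|S i| ≤ i`, such
that every `f ≤* g` satisfies `f ∈* S` for some `S ∈ 𝒮`. -/
def lNum : Cardinal :=
  sInf {c : Cardinal | ∀ g : ℕ → ℕ, ∃ 𝒮 : Set (ℕ → Finset ℕ),
    (∀ S ∈ 𝒮, ∀ i : ℕ, S i ⊆ Finset.range (g i + 1) ∧ (S i).card ≤ i) ∧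
    (∀ f : ℕ → ℕ, LeStar f g → ∃ S ∈ 𝒮, ∀ᶠ i in atTop, f i ∈ S i) ∧
    Cardinal.mk 𝒮 = c}

/-- Membership in `C ⊆ 2^ω` only depends on the first `n` coordinates. -/
def DeterminedBy (C : Set (ℕ → Bool)) (n : ℕ) : Prop :=
  ∀ x y : ℕ → Bool, (∀ i < n, x i = y i) → (x ∈ C ↔ y ∈ C)

/-- Extension of a finite binary string by `false`s. -/
def extendFalse {n : ℕ} (s : Fin n → Bool) : ℕ → Bool :=
  fun i => if h : i < n then s ⟨i, h⟩ else false

/-- `C ⊆ 2^ω` has uniform product measure `1/2`: for some `n`, membership in `C` depends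
only on the first `n` coordinates and exactly half of the `2^n` cylinders of level `n`
are included in `C`. -/
def HalfMeasure (C : Set (ℕ → Bool)) : Prop :=
  ∃ n : ℕ, DeterminedBy C n ∧
    2 * Nat.card {s : Fin n → Bool // extendFalse s ∈ C} = 2 ^ n

/-- Clopenness in the Cantor space `2^ω` (`Bool` discrete, product topology). -/
def IsClopenCantor (C : Set (ℕ → Bool)) : Prop :=
  letI : TopologicalSpace Bool := ⊥
  IsClopen C

/-- Closedness in the Cantor space `2^ω`. -/
def IsClosedCantor (C : Set (ℕ → Bool)) : Prop :=
  letI : TopologicalSpace Bool := ⊥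
  IsClosed C

/-- `Ω`: the (countable) set of clopen subsets of `2^ω` of measure `1/2`. -/
abbrev SoleckiBase : Type := {C : Set (ℕ → Bool) // IsClopenCantor C ∧ HalfMeasure C}

/-- The Solecki ideal `𝒮` on `Ω`: the ideal generated by the sets
`I_y = {C ∈ Ω : y ∈ C}` for `y ∈ 2^ω`. -/
def SoleckiIdeal : Set (Set SoleckiBase) :=
  {A | ∃ F : Finset (ℕ → Bool), A ⊆ ⋃ y ∈ F, {C : SoleckiBase | y ∈ C.val}}

/-- `cov_ω(𝒩)`: the least cardinality of a family of Lebesgue-null sets of reals such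
that every countable set of reals is contained in one of them. -/
def covOmegaNull : Cardinal :=
  sInf {c | ∃ 𝒜 : Set (Set ℝ), (∀ N ∈ 𝒜, MeasureTheory.volume N = 0) ∧
    (∀ B : Set ℝ, B.Countable → ∃ N ∈ 𝒜, B ⊆ N) ∧ Cardinal.mk 𝒜 = c}

/-- `non(𝒩)`: the least cardinality of a non-null set of reals. -/
def nonNullReal : Cardinal :=
  sInf {c | ∃ S : Set ℝ, MeasureTheory.volume S ≠ 0 ∧ Cardinal.mk S = c}

/-- The eventually different ideal `ℰ𝒟` on `ω × ω`. -/
def EDIdeal : Set (Set (ℕ × ℕ)) :=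
  {A | ∃ k : ℕ, ∀ᶠ n in atTop,
    {m : ℕ | (n, m) ∈ A}.Finite ∧ {m : ℕ | (n, m) ∈ A}.ncard ≤ k}

/-- Characteristic function identifying `P(ω)` with `2^ω`. -/
def chiSet (A : Set ℕ) : ℕ → Bool :=
  fun n => @decide (n ∈ A) (Classical.propDecidable _)

/-- `I ⊆ P(ω)` is `F_σ`: under the identification `P(ω) ≅ 2^ω`, `I` is a countable
union of closed subsets of the Cantor space. -/
def IsFSigmaIdeal (I : Set (Set ℕ)) : Prop :=
  ∃ C : ℕ → Set (ℕ → Bool), (∀ n, IsClosedCantor (C n)) ∧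
    ∀ A : Set ℕ, A ∈ I ↔ chiSet A ∈ ⋃ n, C n

/-- The underlying countable set of `Fin^{⊗(n+1)}`: `FinPowType 0 = ω`,
`FinPowType (n+1) = ω × FinPowType n`. -/
def FinPowType : ℕ → Type
  | 0 => ℕ
  | n + 1 => ℕ × FinPowType n

/-- The iterated Fubini power of `Fin`: `FinPowIdeal 0 = Fin`, and
`FinPowIdeal (n+1) = Fin ⊗ FinPowIdeal n`; thus `Fin^{⊗k} = FinPowIdeal (k-1)`. -/
def FinPowIdeal : (n : ℕ) → Set (Set (FinPowType n))
  | 0 => finIdeal ℕ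
  | n + 1 => Fubini (finIdeal ℕ) (FinPowIdeal n)

/-- `π` `k`-constantly bounding-predicts `f`: for all but finitely many `i` there is
`j ∈ [i, i + k)` with `f j ≤ π (f ↾ j)`. -/
def ConstBddPred (k : ℕ) (π : List ℕ → ℕ) (f : ℕ → ℕ) : Prop :=
  ∀ᶠ i in atTop, ∃ j : ℕ, i ≤ j ∧ j < i + k ∧ f j ≤ π (seg f j)

/-- The constant bounding evasion number `𝔢^const_≤(k)`. -/
def eConstLe (k : ℕ) : Cardinal :=
  sInf {c | ∃ F : Set (ℕ → ℕ),
    (∀ π : List ℕ → ℕ, ∃ f ∈ F, ¬ ConstBddPred k π f) ∧ Cardinal.mk F = c}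

/-- The constant bounding prediction number `𝔳^const_≤(k)`. -/
def vConstLe (k : ℕ) : Cardinal :=
  sInf {c | ∃ Ps : Set (List ℕ → ℕ),
    (∀ f : ℕ → ℕ, ∃ π ∈ Ps, ConstBddPred k π f) ∧ Cardinal.mk Ps = c}

/-- The asymptotic density zero ideal `𝒵` on `ω`. -/
def densityZero : Set (Set ℕ) :=
  {A : Set ℕ | Tendsto (fun n : ℕ => ((A ∩ Iio n).ncard : ℝ) / (n : ℝ)) atTop (nhds (0 : ℝ))}

/-- The σ-ideal `ℰ` on `2^ω` generated by the closed null sets. -/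
def EIdeal : Set (Set (ℕ → Bool)) :=
  {A | ∃ C : ℕ → Set (ℕ → Bool),
    (∀ n, IsClosedCantor (C n) ∧ IsNullCantor (C n)) ∧ A ⊆ ⋃ n, C n}


/-! ### Helper lemmas -/

/-- The `i`-th bit of a string (with default `false`). -/
def bt (s : List Bool) (i : ℕ) : Bool := s.getD i false

lemma seg_length {X : Type} (x : ℕ → X) (n : ℕ) : (seg x n).length = n := by simp [seg]

lemma bt_seg (x : ℕ → Bool) {n i : ℕ} (h : i < n) : bt (seg x n) i = x i := by
  simp [bt, seg, h]

lemma prefix_iff_bt (s t : List Bool) :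
    s <+: t ↔ s.length ≤ t.length ∧ ∀ i < s.length, bt t i = bt s i := by
  constructor
  · rintro ⟨r, rfl⟩
    refine ⟨by simp, fun i hi => ?_⟩
    simp only [bt]
    rw [List.getD_append _ _ _ _ hi]
  · rintro ⟨h1, h2⟩
    rw [List.prefix_iff_eq_take]
    apply List.ext_getElem
    · simp [h1]
    · intro i hi hi'
      have := h2 i hi
      have hit : i < t.length := by omega
      simp only [bt, List.getD_eq_getElem _ _ hi, List.getD_eq_getElem _ _ hit] at this
      simp [this]

lemma prefix_seg {s : List Bool} {f : ℕ → Bool} {n : ℕ} (h : s.length ≤ n)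
    (hf : ∀ i < s.length, f i = bt s i) : s <+: seg f n := by
  rw [prefix_iff_bt]
  refine ⟨by rw [seg_length]; exact h, fun i hi => ?_⟩
  rw [bt_seg f (by omega), hf i hi]

lemma seg_prefix_bt {f : ℕ → Bool} {n : ℕ} {u : List Bool} (h : seg f n <+: u) :
    n ≤ u.length ∧ ∀ i < n, bt u i = f i := by
  rw [prefix_iff_bt, seg_length] at h
  exact ⟨h.1, fun i hi => by rw [h.2 i hi, bt_seg f hi]⟩

lemma open_nbhd {U : Set (ℕ → Bool)} (hU : IsOpen U) {y : ℕ → Bool} (hy : y ∈ U) :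
    ∃ M : ℕ, ∀ z : ℕ → Bool, (∀ i < M, z i = y i) → z ∈ U := by
  obtain ⟨v, ⟨x, n, rfl⟩, hyv, hv⟩ :=
    (PiNat.isTopologicalBasis_cylinders (fun _ : ℕ => Bool)).exists_subset_of_mem_open hy hU
  refine ⟨n, fun z hz => hv ?_⟩
  intro i hi
  rw [hz i hi, hyv i hi]

lemma isOpen_of_nbhd {U : Set (ℕ → Bool)}
    (h : ∀ y ∈ U, ∃ M : ℕ, ∀ z : ℕ → Bool, (∀ i < M, z i = y i) → z ∈ U) : IsOpen U := by
  rw [isOpen_iff_forall_mem_open]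
  intro y hy
  obtain ⟨M, hM⟩ := h y hy
  exact ⟨PiNat.cylinder y M, fun z hz => hM z hz, PiNat.isOpen_cylinder _ _ _,
    PiNat.self_mem_cylinder y M⟩

lemma dense_of_nbhd {U : Set (ℕ → Bool)}
    (h : ∀ (y : ℕ → Bool) (M : ℕ), ∃ z ∈ U, ∀ i < M, z i = y i) : Dense U := by
  rw [dense_iff_inter_open]
  rintro V hV ⟨y, hy⟩
  obtain ⟨M, hM⟩ := open_nbhd hV hy
  obtain ⟨z, hz, hzy⟩ := h y M
  exact ⟨z, hM z hzy, hz⟩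

/-- The set of points with an initial segment all of whose extensions avoid `B`. -/
def avoidSet (B : Set (List Bool)) : Set (ℕ → Bool) :=
  {x | ∃ n, ∀ u, seg x n <+: u → u ∉ B}

lemma avoidSet_open (B : Set (List Bool)) : IsOpen (avoidSet B) := by
  apply isOpen_of_nbhd
  rintro y ⟨n, hn⟩
  refine ⟨n, fun z hz => ⟨n, ?_⟩⟩
  have : seg z n = seg y n := by
    simp only [seg]
    apply List.map_congr_left
    intro i hi
    exact hz i (List.mem_range.1 hi)
  rwa [this]

lemma avoidSet_dense {B : Set (List Bool)} (hB : B ∈ nwdIdeal) : Dense (avoidSet B) := by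
  apply dense_of_nbhd
  intro y M
  obtain ⟨t, hst, ht⟩ := hB (seg y M)
  obtain ⟨h1, h2⟩ := seg_prefix_bt hst
  refine ⟨bt t, ⟨t.length, fun u hu => ht u ?_⟩, h2⟩
  exact (prefix_seg le_rfl (fun _ _ => rfl)).trans hu

lemma avoidSet_finite {B : Set (List Bool)} {x : ℕ → Bool} (hx : x ∈ avoidSet B) :
    (Set.range (seg x) ∩ B).Finite := by
  obtain ⟨n, hn⟩ := hx
  apply ((Set.finite_Iio n).image (seg x)).subset
  rintro _ ⟨⟨m, rfl⟩, hm⟩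
  refine ⟨m, ?_, rfl⟩
  by_contra hc
  simp only [Set.mem_Iio, not_lt] at hc
  refine hn _ (prefix_seg (by rw [seg_length]; exact hc) ?_) hm
  intro i hi
  rw [seg_length] at hi
  rw [bt_seg x hi]

lemma seg_inj (x : ℕ → Bool) : Function.Injective (seg x) := by
  intro a b h
  have := congrArg List.length h
  simpa [seg_length] using this

lemma family_of_nonmeagre {S : Set (ℕ → Bool)} (hS : ¬ IsMeagre S) :
    ∃ 𝒜 : Set (Set (List Bool)), (∀ A ∈ 𝒜, A.Infinite) ∧
    (∀ B : ℕ → Set (List Bool), (∀ n, B n ∈ nwdIdeal) → ∃ A ∈ 𝒜, ∀ n, (A ∩ B n).Finite) ∧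
    Cardinal.mk 𝒜 ≤ Cardinal.mk S := by
  refine ⟨(fun x => Set.range (seg x)) '' S, ?_, ?_, Cardinal.mk_image_le⟩
  · rintro _ ⟨x, _, rfl⟩
    exact Set.infinite_range_of_injective (seg_inj x)
  · intro B hB
    by_contra hc
    apply hS
    have hres : (⋂ n, avoidSet (B n)) ∈ residual (ℕ → Bool) := by
      rw [countable_iInter_mem]
      exact fun n => residual_of_dense_open (avoidSet_open _) (avoidSet_dense (hB n))
    refine Filter.mem_of_superset hres ?_
    intro x hx hxS
    apply hc
    exact ⟨_, ⟨x, hxS, rfl⟩, fun n => avoidSet_finite (Set.mem_iInter.1 hx n)⟩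

/-- Strings in which no long (with respect to `G`) block of zeros occurs after `N`. -/
def gapSet (G : ℕ → ℕ) (N : ℕ) : Set (List Bool) :=
  {a | ∀ p, N ≤ p → G p ≤ a.length → ∃ i, p ≤ i ∧ i < G p ∧ bt a i = true}

lemma gapSet_nwd (G : ℕ → ℕ) (N : ℕ) : gapSet G N ∈ nwdIdeal := by
  intro s
  set p := max N s.length with hp
  refine ⟨seg (bt s) (max p (G p)), prefix_seg (by omega) (fun _ _ => rfl), fun u hu hB => ?_⟩
  obtain ⟨h1, h2⟩ := seg_prefix_bt hu
  obtain ⟨i, hi1, hi2, hi3⟩ := hB p (by omega) (by omega)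
  rw [h2 i (by omega)] at hi3
  have : s.length ≤ i := by omega
  simp only [bt, List.getD_eq_default _ _ this] at hi3
  exact absurd hi3 (by simp)

/-- `u` extends `σ 0^n`. -/
def ExtZ (σ : List Bool) (n : ℕ) (u : List Bool) : Prop :=
  σ.length + n ≤ u.length ∧ ∀ i < σ.length + n, bt u i = bt σ i

/-- Short strings near `σ 0^∞`. -/
def nearSet (G : ℕ → ℕ) (σ : List Bool) : Set (List Bool) :=
  {a | ∃ n, ExtZ σ n a ∧ a.length ≤ G n}

lemma nearSet_nwd {G : ℕ → ℕ} (hG : Monotone G) (σ : List Bool) : nearSet G σ ∈ nwdIdeal := by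
  intro s
  set p := max σ.length s.length with hp
  set f : ℕ → Bool := fun i => if i = p then true else bt s i with hf
  refine ⟨seg f (max (p + 1) (G (p + 1) + 1)), prefix_seg (by omega) ?_, ?_⟩
  · intro i hi
    have : i ≠ p := by omega
    simp [hf, this]
  · rintro u hu ⟨n, ⟨hn1, hn2⟩, hn3⟩
    obtain ⟨h1, h2⟩ := seg_prefix_bt hu
    by_cases hpn : p < σ.length + n
    · have e1 := hn2 p hpn
      rw [h2 p (by omega)] at e1
      have : σ.length ≤ p := by omega
      simp only [hf, bt, List.getD_eq_default _ _ this] at e1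
      simp at e1
    · have : G n ≤ G (p + 1) := hG (by omega)
      omega

lemma finite_length_le (m : ℕ) : {a : List Bool | a.length ≤ m}.Finite :=
  List.finite_length_le Bool m

lemma exists_long {A : Set (List Bool)} (hA : A.Infinite) (m : ℕ) : ∃ a ∈ A, m < a.length := by
  by_contra! hc
  exact hA ((finite_length_le m).subset fun a ha => hc a ha)

lemma bounded_of_finite {A : Set (List Bool)} (hA : A.Finite) : ∃ m, ∀ a ∈ A, a.length < m := by
  obtain ⟨m, hm⟩ := (hA.image List.length).bddAbove
  exact ⟨m + 1, fun a ha => Nat.lt_succ_of_le (hm ⟨a, ha, rfl⟩)⟩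

/-- Every infinite set of strings yields a function which is unbounded over `G`, provided
the set is almost disjoint from certain nowhere dense sets read off from `G`. -/
lemma exists_unbounded {A : Set (List Bool)} (hA : A.Infinite) :
    ∃ j : ℕ → ℕ, ∀ G : ℕ → ℕ, Monotone G → (∀ N, (A ∩ gapSet G N).Finite) →
      (∀ σ, (A ∩ nearSet G σ).Finite) → ∀ N, ∃ n, N ≤ n ∧ G n < j n := by
  by_cases hc : ∀ p, ∃ q, ∀ a ∈ A, q ≤ a.length → ∃ i, p ≤ i ∧ i < q ∧ bt a i = true
  · choose j hj using hc
    refine ⟨j, fun G _ h1 _ N => ?_⟩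
    obtain ⟨a, haA, haB⟩ : ∃ a ∈ A, a ∉ gapSet G N := by
      by_contra! hcon
      exact hA ((h1 N).subset fun a ha => ⟨ha, hcon a ha⟩)
    simp only [gapSet, Set.mem_ofPred_eq, not_forall] at haB
    obtain ⟨p, hp, hpl, hz⟩ := haB
    refine ⟨p, hp, ?_⟩
    by_contra! hle
    obtain ⟨i, hi1, hi2, hi3⟩ := hj p a haA (by omega)
    exact hz ⟨i, hi1, by omega, hi3⟩
  · push Not at hc
    obtain ⟨p, hp⟩ := hc
    -- pigeonhole
    obtain ⟨σ, hσ⟩ : ∃ σ : List Bool, ∀ n, ∃ a ∈ A, ExtZ σ n a := by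
      choose a haA hal haz using fun n => hp (p + n)
      obtain ⟨σ, hσ, hinf⟩ : ∃ σ ∈ {l : List Bool | l.length ≤ p},
          ((fun n => (a n).take p) ⁻¹' {σ}).Infinite := by
        by_contra! hcon
        have hfin : (⋃ σ ∈ {l : List Bool | l.length ≤ p},
            ((fun n => (a n).take p) ⁻¹' {σ})).Finite :=
          (finite_length_le p).biUnion fun σ hσ => by
            simpa [Set.not_infinite] using hcon σ hσ
        apply Set.infinite_univ (α := ℕ)
        refine hfin.subset fun n _ => ?_
        simp
      refine ⟨σ, fun n => ?_⟩
      obtain ⟨m, hm, hnm⟩ := hinf.exists_gt n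
      simp only [Set.mem_preimage, Set.mem_singleton_iff] at hm
      have hl := hal m
      have hσl : σ.length = p := by rw [← hm]; simp; omega
      refine ⟨a m, haA m, by omega, fun i hi => ?_⟩
      by_cases hip : i < p
      · have hpre : σ <+: a m := by rw [← hm]; exact List.take_prefix _ _
        exact ((prefix_iff_bt _ _).1 hpre).2 i (by omega)
      · have := haz m i (by omega) (by omega)
        have h3 : σ.length ≤ i := by omega
        simp only [bt, List.getD_eq_default _ _ h3] at this ⊢
        simpa using this
    have hmin : ∀ n, ∃ k, (∃ a ∈ A, ExtZ σ n a ∧ a.length = k) := fun n => by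
      obtain ⟨a, h1, h2⟩ := hσ n
      exact ⟨_, a, h1, h2, rfl⟩
    choose j a haA hae haj using hmin
    refine ⟨j, fun G _ _ h2 N => ?_⟩
    obtain ⟨m, hm⟩ := bounded_of_finite (h2 σ)
    refine ⟨max N m, le_max_left _ _, ?_⟩
    by_contra! hle
    have := hm (a (max N m)) ⟨haA _, _, hae _, by rw [haj]; exact hle⟩
    have h3 := (hae (max N m)).1
    omega

/-- Strings `s` such that every point agreeing with `s` from `N` on is in `U`. -/
def goodSet (U : Set (ℕ → Bool)) (N : ℕ) : Set (List Bool) :=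
  {s | ∀ x : ℕ → Bool, (∀ i, N ≤ i → i < s.length → x i = bt s i) → x ∈ U}

lemma goodSet_compl_nwd {U : Set (ℕ → Bool)} (hU : IsOpen U) (hd : Dense U) (N : ℕ) :
    (goodSet U N)ᶜ ∈ nwdIdeal := by
  have key : ∀ T : Finset (Fin N → Bool), ∀ s : List Bool, ∃ t, s <+: t ∧ N ≤ t.length ∧
      ∀ x : ℕ → Bool, (fun i : Fin N => x i) ∈ T →
        (∀ i, N ≤ i → i < t.length → x i = bt t i) → x ∈ U := by
    intro T
    induction T using Finset.induction_on with
    | empty =>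
      intro s
      refine ⟨seg (bt s) (max N s.length), prefix_seg (by omega) (fun _ _ => rfl), ?_, ?_⟩
      · rw [seg_length]; omega
      · intro x hx; simp at hx
    | insert τ T _ ih =>
      intro s
      obtain ⟨t, hst, hNt, ht⟩ := ih s
      set y : ℕ → Bool := fun i => if h : i < N then τ ⟨i, h⟩ else bt t i with hy
      obtain ⟨z, hzy, hzU⟩ := hd.inter_open_nonempty (PiNat.cylinder y t.length)
        (PiNat.isOpen_cylinder _ _ _) ⟨y, PiNat.self_mem_cylinder y _⟩
      obtain ⟨M, hM⟩ := open_nbhd hU hzU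
      set f : ℕ → Bool := fun i => if i < t.length then bt t i else z i with hf
      have htf : t <+: seg f (max M t.length) :=
        prefix_seg (by omega) (fun i hi => by simp [hf, hi])
      refine ⟨seg f (max M t.length), hst.trans htf, by rw [seg_length]; omega, ?_⟩
      intro x hx hxf
      rw [seg_length] at hxf
      rw [Finset.mem_insert] at hx
      rcases hx with hx | hx
      · apply hM
        intro i hi
        by_cases hiN : i < N
        · have e1 : z i = y i := hzy i (by omega)
          rw [e1]
          simp only [hy, hiN, dif_pos]
          rw [← hx]
        · rw [hxf i (by omega) (by omega), bt_seg f (by omega)]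
          by_cases hit : i < t.length
          · have e1 : z i = y i := hzy i hit
            rw [e1]; simp [hf, hy, hit, hiN]
          · simp [hf, hit]
      · refine ht x hx fun i h1 h2 => ?_
        rw [hxf i h1 (by omega), bt_seg f (by omega)]
        simp [hf, h2]
  intro s
  obtain ⟨t, hst, hNt, ht⟩ := key Finset.univ s
  refine ⟨t, hst, fun u hu hun => hun ?_⟩
  intro x hx
  rw [prefix_iff_bt] at hu
  refine ht x (Finset.mem_univ _) fun i h1 h2 => ?_
  rw [hx i h1 (by omega), hu.2 i h2]

/-- Block sequence. -/
def blk (j : ℕ → ℕ) : ℕ → ℕ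
  | 0 => 0
  | n + 1 => max (blk j n + 1) (j (n + 1))

lemma blk_strictMono (j : ℕ → ℕ) : StrictMono (blk j) :=
  strictMono_nat_of_lt_succ fun n => by simp only [blk]; omega

lemma le_blk (j : ℕ → ℕ) {n : ℕ} (hn : 0 < n) : j n ≤ blk j n := by
  obtain ⟨m, rfl⟩ : ∃ m, n = m + 1 := ⟨n - 1, by omega⟩
  simp only [blk]; omega

lemma exists_glue (J : ℕ → ℕ) (hJ : StrictMono J) (w : ℕ → ℕ → Bool) :
    ∃ x : ℕ → Bool, ∀ n i, J n ≤ i → i < J (n + 1) → x i = w n i := by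
  refine ⟨fun i => w (Nat.findGreatest (fun n => J n ≤ i) i) i, fun n i h1 h2 => ?_⟩
  have : Nat.findGreatest (fun n => J n ≤ i) i = n := by
    rw [Nat.findGreatest_eq_iff]
    refine ⟨(hJ.id_le n).trans h1, fun _ => h1, fun m hm _ hle => ?_⟩
    have := hJ.monotone (show n + 1 ≤ m from hm)
    omega
  simp only [this]

lemma exists_pick (A : Set (List Bool)) (m : ℕ) :
    ∃ b : List Bool, ∀ a ∈ A, a.length ≤ m → b ∈ A ∧ b.length ≤ m ∧ a.length ≤ b.length := by
  by_cases h : ∃ a ∈ A, a.length ≤ m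
  · have hf : (A ∩ {a | a.length ≤ m}).Finite := (finite_length_le m).subset inter_subset_right
    obtain ⟨b, hb, hmax⟩ := Set.exists_max_image _ List.length hf (by
      obtain ⟨a, h1, h2⟩ := h; exact ⟨a, h1, h2⟩)
    exact ⟨b, fun a h1 h2 => ⟨hb.1, hb.2, hmax a ⟨h1, h2⟩⟩⟩
  · push Not at h
    exact ⟨[], fun a h1 h2 => absurd (h a h1) (by omega)⟩

/-- The longest element of `A` of length at most `m`. -/
def pick (A : Set (List Bool)) (m : ℕ) : List Bool := (exists_pick A m).choose

lemma pick_spec (A : Set (List Bool)) (m : ℕ) : ∀ a ∈ A, a.length ≤ m →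
    pick A m ∈ A ∧ (pick A m).length ≤ m ∧ a.length ≤ (pick A m).length :=
  (exists_pick A m).choose_spec

/-- The point obtained from `A` and the block sequence of `j`. -/
def glue (A : Set (List Bool)) (j : ℕ → ℕ) : ℕ → Bool :=
  (exists_glue (blk j) (blk_strictMono j) fun n => bt (pick A (blk j (n + 1)))).choose

lemma glue_spec (A : Set (List Bool)) (j : ℕ → ℕ) : ∀ n i, blk j n ≤ i → i < blk j (n + 1) →
    glue A j i = bt (pick A (blk j (n + 1))) i :=
  (exists_glue (blk j) (blk_strictMono j) fun n => bt (pick A (blk j (n + 1)))).choose_spec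

/-- A block sequence which is not dominated makes infinitely many big jumps. -/
lemma big_jump (j Φ : ℕ → ℕ) (hΦ : Monotone Φ) (hid : ∀ n, n ≤ Φ n)
    (h : ∀ N, ∃ n, N ≤ n ∧ Φ^[n] n < j n) (N : ℕ) :
    ∃ n, N ≤ n ∧ Φ (blk j n) ≤ blk j (n + 1) := by
  by_contra! hc
  have h1 : ∀ k, blk j (N + k) ≤ Φ^[k] (blk j N) := by
    intro k
    induction k with
    | zero => simp
    | succ k ih =>
      rw [Function.iterate_succ_apply']
      exact (hc (N + k) (by omega)).le.trans (hΦ ih)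
  obtain ⟨n, hn, hlt⟩ := h (N + blk j N + 1)
  have h2 := le_blk j (show 0 < n by omega)
  have h3 := h1 (n - N)
  rw [show N + (n - N) = n by omega] at h3
  have h4 : Φ^[n - N] (blk j N) ≤ Φ^[n - N] n := hΦ.iterate _ (by omega)
  have h5 : Φ^[n - N] n ≤ Φ^[n] n :=
    Function.monotone_iterate_of_id_le (fun n => hid n) (show n - N ≤ n by omega) n
  omega

lemma family_countable {𝒜 : Set (Set (List Bool))}
    (h : ∀ B : ℕ → Set (List Bool), (∀ n, B n ∈ nwdIdeal) → ∃ A ∈ 𝒜, ∀ n, (A ∩ B n).Finite)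
    {G : ℕ → ℕ} (hG : Monotone G) : ∃ A ∈ 𝒜, (∀ N, (A ∩ gapSet G N).Finite) ∧
      (∀ σ, (A ∩ nearSet G σ).Finite) := by
  have hcount : (Set.range (gapSet G) ∪ Set.range (nearSet G)).Countable :=
    (Set.countable_range _).union (Set.countable_range _)
  obtain ⟨B, hB⟩ := hcount.exists_eq_range ⟨_, Or.inl ⟨0, rfl⟩⟩
  have hB' : ∀ n, B n ∈ nwdIdeal := by
    intro n
    have : B n ∈ Set.range (gapSet G) ∪ Set.range (nearSet G) := hB ▸ ⟨n, rfl⟩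
    rcases this with ⟨N, hN⟩ | ⟨σ, hσ⟩
    · rw [← hN]; exact gapSet_nwd G N
    · rw [← hσ]; exact nearSet_nwd hG σ
  obtain ⟨A, hA, hfin⟩ := h B hB'
  refine ⟨A, hA, fun N => ?_, fun σ => ?_⟩
  · have : gapSet G N ∈ Set.range B := hB ▸ Or.inl ⟨N, rfl⟩
    obtain ⟨n, hn⟩ := this
    rw [← hn]; exact hfin n
  · have : nearSet G σ ∈ Set.range B := hB ▸ Or.inr ⟨σ, rfl⟩
    obtain ⟨n, hn⟩ := this
    rw [← hn]; exact hfin n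

lemma nonmeagre_of_family {𝒜 : Set (Set (List Bool))} (hinf : ∀ A ∈ 𝒜, A.Infinite)
    (h : ∀ B : ℕ → Set (List Bool), (∀ n, B n ∈ nwdIdeal) → ∃ A ∈ 𝒜, ∀ n, (A ∩ B n).Finite) :
    ∃ S : Set (ℕ → Bool), ¬ IsMeagre S ∧ Cardinal.mk S ≤ Cardinal.mk 𝒜 := by
  choose j hj using fun A : 𝒜 => exists_unbounded (hinf A.1 A.2)
  have hunb : ∀ G : ℕ → ℕ, Monotone G → ∃ A : 𝒜, ∀ N, ∃ n, N ≤ n ∧ G n < j A n := by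
    intro G hG
    obtain ⟨A, hA, h1, h2⟩ := family_countable h hG
    exact ⟨⟨A, hA⟩, hj ⟨A, hA⟩ G hG h1 h2⟩
  -- the family is infinite
  have hInf : Infinite 𝒜 := by
    by_contra hfin
    rw [not_infinite_iff_finite] at hfin
    have := Fintype.ofFinite 𝒜
    obtain ⟨A, hA⟩ := hunb (fun n => ∑ m ∈ Finset.range (n + 1), ∑ A : 𝒜, j A m) (by
      intro a b hab
      exact Finset.sum_le_sum_of_subset (Finset.range_mono (by omega)))
    obtain ⟨n, _, hn⟩ := hA 0
    have e1 : j A n ≤ ∑ A : 𝒜, j A n :=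
      Finset.single_le_sum (f := fun A => j A n) (fun _ _ => Nat.zero_le _) (Finset.mem_univ A)
    have e2 : ∑ A : 𝒜, j A n ≤ ∑ m ∈ Finset.range (n + 1), ∑ A : 𝒜, j A m :=
      Finset.single_le_sum (f := fun m => ∑ A : 𝒜, j A m) (fun _ _ => Nat.zero_le _)
        (Finset.mem_range.2 (Nat.lt_succ_self n))
    omega
  refine ⟨Set.range fun q : 𝒜 × 𝒜 => glue q.1.1 (j q.2), ?_, ?_⟩
  · intro hM
    obtain ⟨t, htS, hGδ, hdt⟩ := mem_residual.1 hM
    obtain ⟨V, hVo, rfl⟩ := hGδ.eq_iInter_nat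
    set U : ℕ → Set (ℕ → Bool) := fun N => ⋂ m ∈ Finset.range (N + 1), V m with hUdef
    have hUo : ∀ N, IsOpen (U N) := fun N => isOpen_biInter_finset fun m _ => hVo m
    have hUd : ∀ N, Dense (U N) := fun N => hdt.mono fun x hx => by
      simp only [hUdef, Set.mem_iInter] at hx ⊢
      exact fun m _ => hx m
    obtain ⟨A, hA, hAf⟩ := h (fun N => (goodSet (U N) N)ᶜ)
      fun N => goodSet_compl_nwd (hUo N) (hUd N) N
    choose φ hφ using fun N => bounded_of_finite (hAf N)
    choose c hcA hcl using fun N => exists_long (hinf A hA) (φ N)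
    set Φ : ℕ → ℕ := fun n => n + ∑ m ∈ Finset.range (n + 1), (c m).length with hΦdef
    have hΦm : Monotone Φ := by
      intro a b hab
      exact Nat.add_le_add hab (Finset.sum_le_sum_of_subset (Finset.range_mono (by omega)))
    have hΦid : ∀ n, n ≤ Φ n := fun n => Nat.le_add_right _ _
    have hΦc : ∀ n, (c n).length ≤ Φ n := fun n => by
      have : (c n).length ≤ ∑ m ∈ Finset.range (n + 1), (c m).length :=
        Finset.single_le_sum (f := fun m => (c m).length) (fun _ _ => Nat.zero_le _)
          (Finset.mem_range.2 (Nat.lt_succ_self n))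
      simp only [hΦdef]; omega
    obtain ⟨A', hA'⟩ := hunb (fun n => Φ^[n] n) (by
      intro a b hab
      exact (hΦm.iterate a hab).trans
        (Function.monotone_iterate_of_id_le (fun n => hΦid n) hab b))
    have hx : glue A (j A') ∈ ⋂ m, V m := by
      rw [Set.mem_iInter]
      intro m
      obtain ⟨n, hmn, hn⟩ := big_jump (j A') Φ hΦm hΦid hA' m
      have hmN : m ≤ blk (j A') n := hmn.trans ((blk_strictMono (j A')).id_le n)
      set N := blk (j A') n with hN
      obtain ⟨p1, p2, p3⟩ := pick_spec A (blk (j A') (n + 1)) (c N) (hcA N)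
        ((hΦc N).trans hn)
      have hgood : pick A (blk (j A') (n + 1)) ∈ goodSet (U N) N := by
        by_contra hbad
        have e1 := hφ N _ ⟨p1, hbad⟩
        have e2 := hcl N
        omega
      have hxU : glue A (j A') ∈ U N := hgood _ fun i h1 h2 =>
        glue_spec A (j A') n i h1 (by omega)
      simp only [hUdef, Set.mem_iInter] at hxU
      exact hxU m (Finset.mem_range.2 (by omega))
    exact htS hx ⟨(⟨A, hA⟩, A'), rfl⟩
  · refine Cardinal.mk_range_le.trans ?_
    rw [Cardinal.mk_prod, Cardinal.lift_id]
    exact (Cardinal.mul_eq_self (Cardinal.infinite_iff.1 hInf)).le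

lemma not_meagre_univ_cantor : ¬ IsMeagre (Set.univ : Set (ℕ → Bool)) := by
  intro hM
  obtain ⟨t, htS, _, hdt⟩ := mem_residual.1 hM
  obtain ⟨x, hx⟩ := hdt.nonempty
  exact htS hx (Set.mem_univ x)

lemma mem_meagerIdeal_iff (S : Set (ℕ → Bool)) : S ∈ meagerIdeal Bool ↔ IsMeagre S := Iff.rfl

/-- `non*_ω(nwd) = non(ℳ)`. -/
theorem stmt11 : sInf (nonStarOmegaFam nwdIdeal) = nonIdeal (meagerIdeal Bool) := by
  have hne : (nonStarOmegaFam nwdIdeal).Nonempty := by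
    obtain ⟨𝒜, h1, h2, _⟩ := family_of_nonmeagre not_meagre_univ_cantor
    exact ⟨_, 𝒜, h1, h2, rfl⟩
  apply le_antisymm
  · refine le_csInf ⟨_, Set.univ, fun h => not_meagre_univ_cantor ((mem_meagerIdeal_iff _).1 h),
      rfl⟩ ?_
    rintro _ ⟨S, hS, rfl⟩
    obtain ⟨𝒜, h1, h2, h3⟩ := family_of_nonmeagre (fun h => hS ((mem_meagerIdeal_iff S).2 h))
    have hm : Cardinal.mk 𝒜 ∈ nonStarOmegaFam nwdIdeal := ⟨𝒜, h1, h2, rfl⟩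
    exact (csInf_le' hm).trans h3
  · refine le_csInf hne ?_
    rintro _ ⟨𝒜, h1, h2, rfl⟩
    obtain ⟨S, hS, hc⟩ := nonmeagre_of_family h1 h2
    have hm : Cardinal.mk S ∈ {c | ∃ S : Set (ℕ → Bool), S ∉ meagerIdeal Bool ∧
        Cardinal.mk S = c} := ⟨S, fun h => hS ((mem_meagerIdeal_iff S).1 h), rfl⟩
    exact (csInf_le' hm).trans hc

end
end

section
/- non*_ω(ℰ𝒟) = cov(ℳ), where ℰ𝒟 is the eventually different ideal and cov(ℳ) is the covering number of the meager ideal. -/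
open Cardinal Filter Set
open scoped ENNReal

noncomputable section

/-- `ι` is too small to index a witness for `non*_ω(ℰ𝒟)`. -/
def SmallIdx (ι : Type) : Prop :=
  ∀ 𝒜 : Set (Set (ℕ × ℕ)), Cardinal.mk 𝒜 ≤ Cardinal.mk ι →
    Cardinal.mk 𝒜 ∉ nonStarOmegaFam EDIdeal

/-- Countably many guessing functions. -/
lemma guess_countable {ι : Type} (hι : SmallIdx ι) {C : Type} [Encodable C] [Inhabited C]
    (H : ι → ℕ → C) :
    ∃ g : ℕ → ℕ → C, ∀ a, ∃ i, {n | g i n = H a n}.Infinite := by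
  classical
  set G : ι → Set (ℕ × ℕ) := fun a => Set.range (fun n => (n, Encodable.encode (H a n))) with hG
  have h1 := hι (Set.range G) Cardinal.mk_range_le
  have hinf : ∀ A ∈ Set.range G, A.Infinite := by
    rintro _ ⟨a, rfl⟩
    apply Set.infinite_range_of_injective
    intro x y hxy
    exact (Prod.mk.inj hxy).1
  have h2 : ∃ B : ℕ → Set (ℕ × ℕ), (∀ n, B n ∈ EDIdeal) ∧
      ∀ a, ∃ n, (G a ∩ B n).Infinite := by
    by_contra hcon
    push Not at hcon
    apply h1
    refine ⟨Set.range G, hinf, ?_, rfl⟩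
    intro B hB
    obtain ⟨a, ha⟩ := hcon B hB
    refine ⟨G a, ⟨a, rfl⟩, fun n => ?_⟩
    simpa using ha n
  obtain ⟨B, hB, hBG⟩ := h2
  let col : ℕ → ℕ → List ℕ := fun b n =>
    if h : {m : ℕ | (n, m) ∈ B b}.Finite then h.toFinset.toList else []
  refine ⟨fun i n => (Encodable.decode ((col i.unpair.1 n).getD i.unpair.2 0)).getD default, ?_⟩
  intro a
  obtain ⟨b, hb⟩ := hBG a
  obtain ⟨k, hk⟩ := hB b
  obtain ⟨N, hN⟩ := eventually_atTop.1 hk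
  set S : Set ℕ := {n | (n, Encodable.encode (H a n)) ∈ B b} with hS
  have hSinf : S.Infinite := by
    intro hfin
    apply hb
    apply (hfin.image (fun n => (n, Encodable.encode (H a n)))).subset
    rintro _ ⟨⟨n, rfl⟩, hn⟩
    exact ⟨n, hn, rfl⟩
  have hSinf2 : (S ∩ Set.Ici N).Infinite := by
    intro hfin
    apply hSinf
    apply (hfin.union (Set.finite_lt_nat N)).subset
    intro n hn
    by_cases h : N ≤ n
    · exact Or.inl ⟨hn, h⟩
    · exact Or.inr (by simpa using h)
  have hcov : S ∩ Set.Ici N ⊆ ⋃ j ∈ Finset.range k,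
      {n | (col b n).getD j 0 = Encodable.encode (H a n)} := by
    rintro n ⟨hn, hNn⟩
    obtain ⟨hf, hc⟩ := hN n hNn
    have hcol : col b n = hf.toFinset.toList := by simp only [col, dif_pos hf]
    have hmem : Encodable.encode (H a n) ∈ col b n := by
      rw [hcol, Finset.mem_toList, Set.Finite.mem_toFinset]; exact hn
    obtain ⟨j, hj, hje⟩ := List.getElem_of_mem hmem
    have hlen : (col b n).length ≤ k := by
      rw [hcol, Finset.length_toList, ← Set.ncard_eq_toFinset_card _ hf]; exact hc
    simp only [Set.mem_iUnion]
    refine ⟨j, Finset.mem_range.2 (by omega), ?_⟩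
    simp [hj, hje]
  have : ∃ j, {n | (col b n).getD j 0 = Encodable.encode (H a n)}.Infinite := by
    by_contra hcon
    push Not at hcon
    apply hSinf2
    refine Set.Finite.subset (Set.Finite.biUnion (Finset.finite_toSet (Finset.range k))
      (fun j _ => ?_)) hcov
    simpa using hcon j
  obtain ⟨j, hj⟩ := this
  refine ⟨Nat.pair b j, hj.mono ?_⟩
  intro n hn
  simp only [Set.mem_ofPred_eq] at hn ⊢
  rw [Nat.unpair_pair]
  simp only
  rw [hn]
  simp

/-- Injective selection from large finite sets. -/
lemma inj_select (D : ℕ → Finset ℕ) (hD : ∀ t, t < (D t).card) :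
    ∃ k : ℕ → ℕ, Function.Injective k ∧ ∀ t, k t ∈ D t := by
  classical
  rw [← Finset.all_card_le_biUnion_card_iff_exists_injective]
  intro s
  rcases s.eq_empty_or_nonempty with rfl | hs
  · simp
  · have h1 : s ⊆ Finset.range (s.max' hs + 1) := by
      intro x hx
      have := s.le_max' x hx
      simp; omega
    have h2 := Finset.card_le_card h1
    have h3 : D (s.max' hs) ⊆ s.biUnion D := Finset.subset_biUnion_of_mem D (s.max'_mem hs)
    have h4 := Finset.card_le_card h3
    have := hD (s.max' hs)
    simp at h2
    omega

/-- A single function guessing on prescribed infinite sets. -/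
lemma guess_single {ι : Type} (hι : SmallIdx ι) (h : ι → ℕ → ℕ) (X : ι → Set ℕ)
    (hX : ∀ a, (X a).Infinite) :
    ∃ g : ℕ → ℕ, ∀ a, {p | p ∈ X a ∧ g p = h a p}.Infinite := by
  classical
  have hF : ∀ a n, ∃ F : Finset ℕ, (F : Set ℕ) ⊆ X a ∧ F.card = (n + 1) ^ 2 :=
    fun a n => (hX a).exists_subset_card_eq _
  choose F hFX hFc using hF
  let H : ι → ℕ → Finset (ℕ × ℕ) := fun a n => (F a n).image (fun p => (p, h a p))
  obtain ⟨g, hg⟩ := guess_countable hι H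
  let P : ℕ → Finset (ℕ × ℕ) := fun t =>
    if t < ((g t.unpair.2 t.unpair.1).image Prod.fst).card then g t.unpair.2 t.unpair.1
    else (Finset.range (t + 1)).image (fun p => (p, 0))
  have hP : ∀ t, t < ((P t).image Prod.fst).card := by
    intro t
    by_cases hc : t < ((g t.unpair.2 t.unpair.1).image Prod.fst).card
    · simp only [P, if_pos hc]; exact hc
    · simp only [P, if_neg hc]
      rw [Finset.image_image]
      have : (Prod.fst ∘ fun p : ℕ => (p, 0)) = (id : ℕ → ℕ) := rfl
      rw [this]; simp
  obtain ⟨k, hk, hkD⟩ := inj_select (fun t => (P t).image Prod.fst) hP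
  have hv : ∀ t, ∃ v, (k t, v) ∈ P t := by
    intro t
    obtain ⟨⟨p, v⟩, hp, hpk⟩ := Finset.mem_image.1 (hkD t)
    exact ⟨v, by rw [← hpk]; exact hp⟩
  choose v hv using hv
  refine ⟨Function.extend k v 0, fun a => ?_⟩
  obtain ⟨i, hi⟩ := hg a
  have hi2 : ({n | g i n = H a n} ∩ Set.Ici i).Infinite := by
    intro hfin
    apply hi
    apply (hfin.union (Set.finite_lt_nat i)).subset
    intro n hn
    by_cases h : i ≤ n
    · exact Or.inl ⟨hn, h⟩
    · exact Or.inr (by simpa using h)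
  have hinj : Function.Injective (fun n => k (Nat.pair n i)) := by
    intro x y hxy
    exact (Nat.pair_eq_pair.1 (hk hxy)).1
  refine (hi2.image hinj.injOn).mono ?_
  rintro _ ⟨n, ⟨hn, hin⟩, rfl⟩
  have hin' : i ≤ n := hin
  have hPt : P (Nat.pair n i) = H a n := by
    have hlt : Nat.pair n i < ((H a n).image Prod.fst).card := by
      have : ((H a n).image Prod.fst) = F a n := by
        simp only [H, Finset.image_image]
        have : (Prod.fst ∘ fun p : ℕ => (p, h a p)) = (id : ℕ → ℕ) := rfl
        rw [this]; simp
      rw [this, hFc]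
      have := Nat.pair_lt_max_add_one_sq n i
      rwa [max_eq_left hin'] at this
    have hn' : g i n = H a n := hn
    simp only [P, Nat.unpair_pair, hn', if_pos hlt]
  have hmem := hv (Nat.pair n i)
  rw [hPt] at hmem
  obtain ⟨p, hp, hpe⟩ := Finset.mem_image.1 hmem
  obtain ⟨h1, h2⟩ := Prod.mk.inj hpe
  simp only [Set.mem_ofPred_eq]
  rw [hk.extend_apply, ← h2, ← h1]
  exact ⟨hFX a n hp, rfl⟩

/-- Basic clopen set of a finite sequence. -/
def cylN (s : List ℕ) : Set (ℕ → ℕ) := PiNat.cylinder (fun i => s.getD i 0) s.length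

lemma mem_cylN {s : List ℕ} {x : ℕ → ℕ} : x ∈ cylN s ↔ ∀ i < s.length, x i = s.getD i 0 :=
  Iff.rfl

lemma cylN_append (s t : List ℕ) : cylN (s ++ t) ⊆ cylN s := by
  intro x hx i hi
  have := hx i (by simp; omega)
  simp only [List.getD_append _ _ _ _ hi] at this
  exact this

lemma exists_ext_one {D : Set (ℕ → ℕ)} (hD : IsOpen D) (hd : Dense D) (s : List ℕ) :
    ∃ t, cylN (s ++ t) ⊆ D := by
  have ho : IsOpen (cylN s) := PiNat.isOpen_cylinder _ _ _
  obtain ⟨x, hx, hxD⟩ := hd.inter_open_nonempty _ ho ⟨_, PiNat.self_mem_cylinder _ _⟩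
  obtain ⟨V, ⟨y, n, rfl⟩, hxV, hVD⟩ :=
    (PiNat.isTopologicalBasis_cylinders (fun _ : ℕ => ℕ)).exists_subset_of_mem_open hxD hD
  refine ⟨(List.range n).map (fun i => x (s.length + i)), ?_⟩
  intro z hz
  apply hVD
  have hzx : ∀ i < n, z i = x i := by
    intro i hi
    have h1 := hz i (by simp; omega)
    simp only at h1
    rw [h1]
    by_cases his : i < s.length
    · rw [List.getD_append _ _ _ _ his]
      exact (hx i his).symm
    · rw [List.getD_append_right _ _ _ _ (by omega)]
      rw [List.getD_eq_getElem _ _ (by simp; omega)]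
      simp
      congr 1; omega
  intro i hi
  rw [hzx i hi]
  exact hxV i hi

lemma exists_ext_finset {D : Set (ℕ → ℕ)} (hD : IsOpen D) (hd : Dense D) (S : Finset (List ℕ)) :
    ∃ t, ∀ s ∈ S, cylN (s ++ t) ⊆ D := by
  classical
  induction S using Finset.induction_on with
  | empty => exact ⟨[], by simp⟩
  | insert s S _ ih =>
    obtain ⟨t, ht⟩ := ih
    obtain ⟨u, hu⟩ := exists_ext_one hD hd (s ++ t)
    refine ⟨t ++ u, ?_⟩
    intro r hr
    rw [← List.append_assoc]
    rcases Finset.mem_insert.1 hr with rfl | hr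
    · exact hu
    · exact (cylN_append _ _).trans (ht r hr)

lemma exists_branch (s u : ℕ → List ℕ) (h : ∀ k, s (k + 1) = s k ++ u k) :
    ∃ x : ℕ → ℕ, ∀ k, x ∈ cylN (s k) := by
  classical
  have hpre : ∀ k l, k ≤ l → s k <+: s l := by
    intro k l hkl
    induction l, hkl using Nat.le_induction with
    | base => exact List.prefix_refl _
    | succ l _ ih => rw [h]; exact ih.trans (List.prefix_append _ _)
  have hcons : ∀ k l i, i < (s k).length → i < (s l).length →
      (s k).getD i 0 = (s l).getD i 0 := by
    have key : ∀ k l i, k ≤ l → i < (s k).length → (s k).getD i 0 = (s l).getD i 0 := by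
      intro k l i hkl hi
      obtain ⟨t, ht⟩ := hpre k l hkl
      rw [← ht, List.getD_append _ _ _ _ hi]
    intro k l i hk hl
    rcases le_total k l with hkl | hkl
    · exact key k l i hkl hk
    · exact (key l k i hkl hl).symm
  refine ⟨fun i => if hh : ∃ k, i < (s k).length then (s hh.choose).getD i 0 else 0, ?_⟩
  intro k i hi
  have hh : ∃ k, i < (s k).length := ⟨k, hi⟩
  simp only [dif_pos hh]
  exact hcons _ _ i hh.choose_spec hi

lemma meagre_seq {A : Set (ℕ → ℕ)} (hA : IsMeagre A) :
    ∃ D : ℕ → Set (ℕ → ℕ), (∀ n, IsOpen (D n)) ∧ (∀ n, Dense (D n)) ∧ Antitone D ∧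
      ∀ x, (∀ n, x ∈ D n) → x ∉ A := by
  obtain ⟨S, hSo, hSd, hSc, hSA⟩ := mem_residual_iff.1 hA
  obtain ⟨f, hf⟩ := (hSc.insert Set.univ).exists_eq_range ⟨_, Set.mem_insert _ _⟩
  have hfo : ∀ n, IsOpen (f n) := by
    intro n
    have : f n ∈ insert Set.univ S := by rw [hf]; exact ⟨n, rfl⟩
    rcases this with h | h
    · rw [h]; exact isOpen_univ
    · exact hSo _ h
  have hfd : ∀ n, Dense (f n) := by
    intro n
    have : f n ∈ insert Set.univ S := by rw [hf]; exact ⟨n, rfl⟩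
    rcases this with h | h
    · rw [h]; exact dense_univ
    · exact hSd _ h
  have hod : ∀ n, IsOpen (⋂ i ∈ Set.Iic n, f i) ∧ Dense (⋂ i ∈ Set.Iic n, f i) := by
    intro n
    refine ⟨(Set.finite_Iic n).isOpen_biInter (fun i _ => hfo i), ?_⟩
    exact dense_biInter_of_isOpen (fun i _ => hfo i) (Set.to_countable _) (fun i _ => hfd i)
  refine ⟨fun n => ⋂ i ∈ Set.Iic n, f i, fun n => (hod n).1, fun n => (hod n).2, ?_, ?_⟩
  · intro m n hmn
    exact Set.biInter_subset_biInter_left (Set.Iic_subset_Iic.2 hmn)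
  · intro x hx
    apply hSA
    intro T hT
    have : T ∈ Set.range f := by rw [← hf]; exact Or.inr hT
    obtain ⟨n, rfl⟩ := this
    have := hx n
    simp only [Set.mem_iInter] at this
    exact this n (Set.mem_Iic.2 le_rfl)

/-- A jump sequence infinitely often jumping far enough. -/
lemma exists_jumps {ι : Type} (hι : SmallIdx ι) (f : ι → ℕ → ℕ) (hf : ∀ a, Monotone (f a)) :
    ∃ j : ℕ → ℕ, StrictMono j ∧ ∀ a, {k | f a (j k) ≤ j (k + 1)}.Infinite := by
  obtain ⟨g, hg⟩ := guess_single hι (fun a n => f a (f a n)) (fun _ => Set.univ)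
    (fun _ => Set.infinite_univ)
  let g' : ℕ → ℕ := fun n => n + 1 + ∑ i ∈ Finset.range (n + 1), g i
  have hgg : ∀ m n, m ≤ n → g m < g' n := by
    intro m n hmn
    have : g m ≤ ∑ i ∈ Finset.range (n + 1), g i :=
      Finset.single_le_sum (f := g) (fun _ _ => Nat.zero_le _) (Finset.mem_range.2 (by omega))
    simp only [g']; omega
  obtain ⟨j, hj0, hj⟩ : ∃ j : ℕ → ℕ, j 0 = 0 ∧ ∀ k, j (k + 1) = g' (j k) :=
    ⟨fun k => Nat.rec 0 (fun _ p => g' p) k, rfl, fun _ => rfl⟩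
  have hmono : StrictMono j := by
    apply strictMono_nat_of_lt_succ
    intro k; rw [hj]; simp only [g']; omega
  refine ⟨j, hmono, fun a hfin => ?_⟩
  obtain ⟨N, hN⟩ := hfin.bddAbove
  have hlt : ∀ k, N < k → j (k + 1) < f a (j k) := by
    intro k hk
    by_contra hcon
    have := hN (show k ∈ {k | f a (j k) ≤ j (k + 1)} from not_lt.1 hcon)
    omega
  apply hg a
  apply (Set.finite_lt_nat (j (N + 1))).subset
  rintro m ⟨-, hm⟩
  simp only [Set.mem_ofPred_eq]
  by_contra hcon
  have hle : j (N + 1) ≤ m := not_lt.1 hcon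
  -- find the block of `m`
  have hex : ∃ k, m < j k := ⟨m + 1, lt_of_lt_of_le (Nat.lt_succ_self m) hmono.le_apply⟩
  classical
  obtain ⟨k, hk1, hk2⟩ : ∃ k, j k ≤ m ∧ m < j (k + 1) := by
    have h0 : Nat.find hex ≠ 0 := by
      intro h0
      have := Nat.find_spec hex
      rw [h0, hj0] at this
      exact absurd this (Nat.not_lt_zero _)
    obtain ⟨k, hk⟩ := Nat.exists_eq_succ_of_ne_zero h0
    refine ⟨k, not_lt.1 (Nat.find_min hex (by omega)), ?_⟩
    have := Nat.find_spec hex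
    rwa [hk] at this
  have hNk : N < k := by
    have : j (N + 1) < j (k + 1) := lt_of_le_of_lt hle hk2
    have := hmono.lt_iff_lt.1 this
    omega
  have e1 : f a (j (k + 1)) ≤ f a (f a m) :=
    hf a ((hlt k hNk).le.trans (hf a hk1))
  have e2 := hlt (k + 1) (by omega)
  have e3 := hgg m (j (k + 1)) hk2.le
  rw [← hj] at e3
  omega

/-- Fewer than `non*_ω(ℰ𝒟)` many meager sets do not cover. -/
lemma not_cover {ι : Type} (hι : SmallIdx ι) (M : ι → Set (ℕ → ℕ)) (hM : ∀ a, IsMeagre (M a)) :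
    ∃ x, ∀ a, x ∉ M a := by
  classical
  choose D hDo hDd hDa hDM using fun a => meagre_seq (hM a)
  have hfin : ∀ n : ℕ, {s : List ℕ | Encodable.encode s ≤ n}.Finite := fun n =>
    (Set.finite_Iic n).preimage Encodable.encode_injective.injOn
  choose h hh using fun a n => exists_ext_finset (hDo a n) (hDd a n) (hfin n).toFinset
  let f0 : ι → ℕ → ℕ := fun a n => ∑ s ∈ (hfin n).toFinset, Encodable.encode (s ++ h a n)
  let f : ι → ℕ → ℕ := fun a n => ∑ i ∈ Finset.range (n + 1), f0 a i
  have hf : ∀ a, Monotone (f a) := by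
    intro a m n hmn
    exact Finset.sum_le_sum_of_subset (Finset.range_mono (by omega))
  have hfb : ∀ a n (s : List ℕ), Encodable.encode s ≤ n →
      Encodable.encode (s ++ h a n) ≤ f a n := by
    intro a n s hs
    have h1 : Encodable.encode (s ++ h a n) ≤ f0 a n :=
      Finset.single_le_sum (f := fun s => Encodable.encode (s ++ h a n))
        (fun _ _ => Nat.zero_le _) (by simpa using hs)
    have h2 : f0 a n ≤ f a n :=
      Finset.single_le_sum (f := f0 a) (fun _ _ => Nat.zero_le _) (by simp)
    exact h1.trans h2
  obtain ⟨j, hj, hjf⟩ := exists_jumps hι f hf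
  obtain ⟨g, hg⟩ := guess_single hι (fun a k => Encodable.encode (h a (j k)))
    (fun a => {k | f a (j k) ≤ j (k + 1)}) hjf
  let w : ℕ → List ℕ := fun k => ((Encodable.decode (g k) : Option (List ℕ))).getD []
  let u : ℕ → List ℕ → List ℕ := fun k s =>
    if Encodable.encode (s ++ w k) ≤ j (k + 1) then w k else []
  obtain ⟨s0, hs0⟩ : ∃ s0 : List ℕ, Encodable.encode s0 ≤ j 0 := ⟨[], by simp⟩
  let s : ℕ → List ℕ := fun k => Nat.rec s0 (fun k p => p ++ u k p) k
  have hs : ∀ k, s (k + 1) = s k ++ u k (s k) := fun k => rfl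
  have hsb : ∀ k, Encodable.encode (s k) ≤ j k := by
    intro k
    induction k with
    | zero => exact hs0
    | succ k ih =>
      rw [hs]
      by_cases hc : Encodable.encode (s k ++ w k) ≤ j (k + 1)
      · simp only [u, if_pos hc]; exact hc
      · simp only [u, if_neg hc, List.append_nil]
        exact ih.trans (hj (Nat.lt_succ_self k)).le
  obtain ⟨x, hx⟩ := exists_branch s (fun k => u k (s k)) hs
  refine ⟨x, fun a => hDM a x fun n => ?_⟩
  obtain ⟨k, ⟨hk1, hk2⟩, hnk⟩ := (hg a).exists_gt n
  have hwk : w k = h a (j k) := by simp only [w, hk2]; simp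
  have hk1' : f a (j k) ≤ j (k + 1) := hk1
  have huk : u k (s k) = h a (j k) := by
    have : Encodable.encode (s k ++ w k) ≤ j (k + 1) := by
      rw [hwk]; exact (hfb a (j k) _ (hsb k)).trans hk1'
    simp only [u, if_pos this, hwk]
  have hxk := hx (k + 1)
  rw [hs, huk] at hxk
  have : x ∈ D a (j k) := hh a (j k) (s k) (by simpa using hsb k) hxk
  exact hDa a (hnk.le.trans hj.le_apply) this

/-- Functions meeting `A` only boundedly often. -/
def missSet (A : Set (ℕ × ℕ)) : Set (ℕ → ℕ) := {x | ¬ ∀ N, ∃ n, N ≤ n ∧ (n, x n) ∈ A}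

lemma missSet_meagre (A : Set (ℕ × ℕ)) (hA : ∀ N, ∃ n m, N ≤ n ∧ (n, m) ∈ A) :
    IsMeagre (missSet A) := by
  have hU : ∀ N, IsOpen {x : ℕ → ℕ | ∃ n, N ≤ n ∧ (n, x n) ∈ A} ∧
      Dense {x : ℕ → ℕ | ∃ n, N ≤ n ∧ (n, x n) ∈ A} := by
    intro N
    constructor
    · have : {x : ℕ → ℕ | ∃ n, N ≤ n ∧ (n, x n) ∈ A} =
          ⋃ n ∈ Set.Ici N, (fun x : ℕ → ℕ => x n) ⁻¹' {m | (n, m) ∈ A} := by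
        ext x; simp
      rw [this]
      exact isOpen_biUnion fun n _ => (isOpen_discrete _).preimage (continuous_apply n)
    · rw [(PiNat.isTopologicalBasis_cylinders (fun _ : ℕ => ℕ)).dense_iff]
      rintro _ ⟨y, n, rfl⟩ -
      obtain ⟨p, m, hp, hpm⟩ := hA (max N n)
      refine ⟨Function.update y p m, ?_, p, (le_max_left _ _).trans hp, by simpa using hpm⟩
      intro i hi
      have : i ≠ p := by have := (le_max_right N n).trans hp; omega
      simp [Function.update_of_ne this]
  have : (missSet A)ᶜ = ⋂ N, {x : ℕ → ℕ | ∃ n, N ≤ n ∧ (n, x n) ∈ A} := by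
    ext x; simp [missSet]
  rw [IsMeagre, this, countable_iInter_mem]
  exact fun N => residual_of_dense_open (hU N).1 (hU N).2

lemma meagerIdeal_iff (A : Set (ℕ → ℕ)) : A ∈ meagerIdeal ℕ ↔ IsMeagre A := Iff.rfl

lemma cover_exists : ∃ 𝒞 : Set (Set (ℕ → ℕ)), 𝒞 ⊆ meagerIdeal ℕ ∧ ⋃₀ 𝒞 = Set.univ := by
  refine ⟨meagerIdeal ℕ, subset_rfl, Set.eq_univ_of_forall fun x => ?_⟩
  refine ⟨missSet (Set.range fun n => (n, x n + 1)), ?_, ?_⟩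
  · rw [meagerIdeal_iff]
    exact missSet_meagre _ fun N => ⟨N, x N + 1, le_rfl, N, rfl⟩
  · intro hcon
    obtain ⟨n, -, m, hm⟩ := hcon 0
    simp only [Prod.mk.injEq] at hm
    obtain ⟨rfl, h⟩ := hm
    omega

lemma cover_of_witness (𝒜 : Set (Set (ℕ × ℕ))) (hinf : ∀ A ∈ 𝒜, A.Infinite)
    (hw : ∀ B : ℕ → Set (ℕ × ℕ), (∀ n, B n ∈ EDIdeal) → ∃ A ∈ 𝒜, ∀ n, (A ∩ B n).Finite) :
    ∃ 𝒞 : Set (Set (ℕ → ℕ)), 𝒞 ⊆ meagerIdeal ℕ ∧ ⋃₀ 𝒞 = Set.univ ∧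
      Cardinal.mk 𝒞 ≤ Cardinal.mk 𝒜 := by
  set 𝒜' : Set (Set (ℕ × ℕ)) := {A ∈ 𝒜 | ∀ N, ∃ n m, N ≤ n ∧ (n, m) ∈ A} with h𝒜'
  refine ⟨missSet '' 𝒜', ?_, ?_, Cardinal.mk_image_le.trans
    (Cardinal.mk_le_mk_of_subset (Set.sep_subset _ _))⟩
  · rintro _ ⟨A, hA, rfl⟩
    rw [meagerIdeal_iff]
    exact missSet_meagre A hA.2
  · refine Set.eq_univ_of_forall fun x => ?_
    let B : ℕ → Set (ℕ × ℕ) := fun n =>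
      Nat.casesOn n (Set.range fun n => (n, x n)) (fun n => {p | p.1 = n})
    obtain ⟨A, hA, hAB⟩ := hw B (by
      intro n
      cases n with
      | zero =>
        refine ⟨1, Eventually.of_forall fun n => ?_⟩
        have : {m : ℕ | (n, m) ∈ B 0} = {x n} := by
          ext m
          constructor
          · rintro ⟨y, hy⟩
            obtain ⟨h1, h2⟩ := Prod.mk.inj hy
            subst h1
            exact h2.symm
          · rintro rfl; exact ⟨n, rfl⟩
        rw [this]; simp
      | succ n =>
        refine ⟨0, eventually_atTop.2 ⟨n + 1, fun k hk => ?_⟩⟩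
        have : {m : ℕ | (k, m) ∈ B (n + 1)} = ∅ := by
          ext m
          simp only [B, Set.mem_ofPred_eq, Set.mem_empty_iff_false, iff_false]
          omega
        rw [this]; simp)
    refine ⟨missSet A, ⟨A, ⟨hA, ?_⟩, rfl⟩, ?_⟩
    · intro N
      by_contra hcon
      push Not at hcon
      apply hinf A hA
      apply (Set.Finite.biUnion (Set.finite_lt_nat N) (fun n _ => hAB (n + 1))).subset
      rintro ⟨n, m⟩ hnm
      simp only [Set.mem_iUnion]
      refine ⟨n, ?_, hnm, rfl⟩
      by_contra hn
      exact hcon n m (not_lt.1 hn) hnm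
    · intro hcon
      obtain ⟨N, hN⟩ := ((hAB 0).image Prod.fst).bddAbove
      obtain ⟨n, hn, hnA⟩ := hcon (N + 1)
      have := hN ⟨(n, x n), ⟨hnA, n, rfl⟩, rfl⟩
      simp only at this
      omega

lemma not_small_of_cover (𝒞 : Set (Set (ℕ → ℕ))) (h𝒞 : 𝒞 ⊆ meagerIdeal ℕ)
    (hcov : ⋃₀ 𝒞 = Set.univ) : ¬ SmallIdx 𝒞 := by
  intro hs
  obtain ⟨x, hx⟩ := not_cover hs (fun C : 𝒞 => (C : Set (ℕ → ℕ)))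
    (fun C => (meagerIdeal_iff _).1 (h𝒞 C.2))
  have : x ∈ ⋃₀ 𝒞 := by rw [hcov]; trivial
  obtain ⟨C, hC, hxC⟩ := this
  exact hx ⟨C, hC⟩ hxC

/-- `non*_ω(ℰ𝒟) = cov(ℳ)`, the covering number of the meager ideal of
the Baire space `ω^ω`. -/
theorem stmt13 : sInf (nonStarOmegaFam EDIdeal) = covIdeal (meagerIdeal ℕ) := by
  unfold covIdeal
  apply le_antisymm
  · obtain ⟨𝒞₀, h₀, h₁⟩ := cover_exists
    refine le_csInf ⟨_, 𝒞₀, h₀, h₁, rfl⟩ ?_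
    rintro c ⟨𝒞, h𝒞, hcov, rfl⟩
    have := not_small_of_cover 𝒞 h𝒞 hcov
    simp only [SmallIdx, not_forall, not_not] at this
    obtain ⟨𝒜, hle, hmem⟩ := this
    exact (csInf_le' hmem).trans hle
  · have hne : (nonStarOmegaFam EDIdeal).Nonempty := by
      obtain ⟨𝒞₀, h₀, h₁⟩ := cover_exists
      have := not_small_of_cover 𝒞₀ h₀ h₁
      simp only [SmallIdx, not_forall, not_not] at this
      obtain ⟨𝒜, -, hmem⟩ := this
      exact ⟨_, hmem⟩
    apply le_csInf hne
    rintro c ⟨𝒜, hinf, hw, rfl⟩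
    obtain ⟨𝒞, h1, h2, h3⟩ := cover_of_witness 𝒜 hinf hw
    refine le_trans (csInf_le' ?_) h3
    exact ⟨𝒞, h1, h2, rfl⟩

end
end
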